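/- Let A_1,…,A_k (k ≥ 1) be pairwise commuting V×V matrices with nonnegative integer entries, each with no zero row and no zero column, such that every strongly connected component is nontrivial and coordinatewise irreducible. Suppose D is a strongly connected component which is hereditary as a subset of V, and suppose that for every strongly connected component C and every i ∈ {1,…,k} there exist m ∈ ℕ, v ∈ C and w ∈ D with (A_i^m)(v,w) > 0. If there exists j ∈ {1,…,k} such that ρ(A_{C,j}) < ρ(A_{D,j}) for every strongly connected component C ≠ D, then ρ(A_{C,i}) < ρ(A_{D,i}) for every strongly connected component C ≠ D and every i ∈ {1,…,k}. -/

import Mathlib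

open Matrix

variable {V : Type*} [Fintype V] [DecidableEq V]

/-- `Apow A n = ∏ i, (A i)^(n i)`, the vertex matrix counting paths of degree `n`. -/
def Apow {k : ℕ} (A : Fin k → Matrix V V ℕ) (n : Fin k → ℕ) : Matrix V V ℕ :=
  ((List.finRange k).map fun i => (A i) ^ (n i)).prod

/-- `v` reaches `w` if some `A^n` has a positive `(v, w)` entry. -/
def Reaches {k : ℕ} (A : Fin k → Matrix V V ℕ) (v w : V) : Prop :=
  ∃ n : Fin k → ℕ, 0 < Apow A n v w

/-- `C` is a strongly connected component: the equivalence class of some vertex `v`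
for the relation `v` reaches `w` and `w` reaches `v`. -/
def IsSCC {k : ℕ} (A : Fin k → Matrix V V ℕ) (C : Finset V) : Prop :=
  ∃ v : V, ∀ w : V, w ∈ C ↔ (Reaches A v w ∧ Reaches A w v)

/-- A component is nontrivial if it contains a vertex with a loop of nonzero degree. -/
def NontrivialComp {k : ℕ} (A : Fin k → Matrix V V ℕ) (C : Finset V) : Prop :=
  ∃ v ∈ C, ∃ n : Fin k → ℕ, n ≠ 0 ∧ 0 < Apow A n v v

/-- A component is coordinatewise irreducible if for each colour `i` and all `v, w ∈ C`
there is `m ≥ 1` with `(A_i^m)(v, w) > 0`. -/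
def CoordIrreducible {k : ℕ} (A : Fin k → Matrix V V ℕ) (C : Finset V) : Prop :=
  ∀ i : Fin k, ∀ v ∈ C, ∀ w ∈ C, ∃ m : ℕ, 1 ≤ m ∧ 0 < ((A i) ^ m) v w

/-- A subset `S` is hereditary if `v ∈ S` and `v` reaches `w` imply `w ∈ S`. -/
def Hereditary {k : ℕ} (A : Fin k → Matrix V V ℕ) (S : Finset V) : Prop :=
  ∀ v ∈ S, ∀ w : V, Reaches A v w → w ∈ S

/-- The spectral radius of a square matrix of natural numbers: the maximum modulus of
its complex eigenvalues. -/
noncomputable def specRadN {n : Type*} [Fintype n] [DecidableEq n] (M : Matrix n n ℕ) : ℝ :=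
  (spectralRadius ℂ (M.map (Nat.cast : ℕ → ℂ))).toReal

/-- `compRad A C i` is the spectral radius of the `C × C` submatrix of `A i`. -/
noncomputable def compRad {k : ℕ} (A : Fin k → Matrix V V ℕ) (C : Finset V) (i : Fin k) : ℝ :=
  specRadN ((A i).submatrix (fun c : {x // x ∈ C} => c.1) (fun c : {x // x ∈ C} => c.1))

/-!
For a nonnegative matrix `M` commuting with an entrywise positive matrix `S`, applying `S` to a
weak inequality `s u ≤ M u` (or `M x ≤ s x`) that is not an equality makes it strict everywhere, and
hence makes the corresponding bound on the spectral radius strict. The blocks of the `A i` on a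
component commute with such an `S`, namely the block of a sum of monomials `A ^ n`.

So the blocks on `D` have a common positive eigenvector `x`, with eigenvalues their spectral radii.
Since colour `j` is strictly dominated off `D`, the vector `x` extends uniquely to an eigenvector
`y` of `A j`, and `y` is nonnegative. By uniqueness `y` is an eigenvector of every `A i`, and it is
positive because every vertex reaches `D`. On a component `C ≠ D`, the block of `A i` sends
`y` below `ρ(A_{D,i}) y`, with a strict loss wherever an edge of colour `i` leaves `C`.
-/

open Filter

section SpectralRadius

theorem ofReal_le_spectralRadius_of_pow_le_norm_pow {B : Type*} [NormedRing B]
    [NormedAlgebra ℂ B] [CompleteSpace B] {a : B} {s : ℝ} (hs : 0 ≤ s)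
    (h : ∀ m : ℕ, s ^ m ≤ ‖a ^ m‖) : ENNReal.ofReal s ≤ spectralRadius ℂ a := by
  refine ge_of_tendsto (spectrum.pow_norm_pow_one_div_tendsto_nhds_spectralRadius a) ?_
  filter_upwards [eventually_ne_atTop 0] with m hm
  refine ENNReal.ofReal_le_ofReal ?_
  calc s = (s ^ m) ^ (1 / m : ℝ) := by rw [one_div, Real.pow_rpow_inv_natCast hs hm]
    _ ≤ ‖a ^ m‖ ^ (1 / m : ℝ) := Real.rpow_le_rpow (pow_nonneg hs m) (h m) (by positivity)

/-- The spectral radius of a real square matrix: the maximum modulus of its complex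
eigenvalues. -/
noncomputable def specRad {n : Type*} [Fintype n] [DecidableEq n] (M : Matrix n n ℝ) : ℝ :=
  (spectralRadius ℂ (M.map ((↑) : ℝ → ℂ))).toReal

end SpectralRadius

section NonnegativeMatrix

variable {n : Type*} [Fintype n] {M S : Matrix n n ℝ} {u x : n → ℝ} {s r : ℝ}

theorem mulVec_mono_of_nonneg (hM : ∀ v w, 0 ≤ M v w) {f g : n → ℝ} (h : f ≤ g) :
    M *ᵥ f ≤ M *ᵥ g :=
  fun v => dotProduct_le_dotProduct_of_nonneg_left h (hM v)

theorem mulVec_nonneg_of_nonneg (hM : ∀ v w, 0 ≤ M v w) (hu : 0 ≤ u) : 0 ≤ M *ᵥ u := by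
  simpa using mulVec_mono_of_nonneg hM hu

theorem mulVec_lt_mulVec_of_pos (hS : ∀ v w, 0 < S v w) {f g : n → ℝ} (h : f < g) (v : n) :
    (S *ᵥ f) v < (S *ᵥ g) v := by
  obtain ⟨hle, w, hw⟩ := Pi.lt_def.1 h
  exact Finset.sum_lt_sum (fun a _ => mul_le_mul_of_nonneg_left (hle a) (hS v a).le)
    ⟨w, Finset.mem_univ w, mul_lt_mul_of_pos_left hw (hS v w)⟩

theorem mulVec_pos_of_pos (hS : ∀ v w, 0 < S v w) (hu : 0 < u) (v : n) : 0 < (S *ᵥ u) v := by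
  simpa using mulVec_lt_mulVec_of_pos hS hu v

theorem mulVec_mulVec_comm {R : Type*} [NonUnitalSemiring R] {M S : Matrix n n R}
    (h : Commute M S) (f : n → R) : M *ᵥ (S *ᵥ f) = S *ᵥ (M *ᵥ f) := by
  rw [mulVec_mulVec, h.eq, mulVec_mulVec]

variable [DecidableEq n]

theorem pow_smul_le_pow_mulVec (hM : ∀ v w, 0 ≤ M v w) (hs : 0 ≤ s) (h : s • u ≤ M *ᵥ u)
    (m : ℕ) : s ^ m • u ≤ M ^ m *ᵥ u := by
  induction m with
  | zero => simp
  | succ m ih =>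
    calc s ^ (m + 1) • u = s ^ m • (s • u) := by rw [pow_succ, mul_smul]
      _ ≤ s ^ m • (M *ᵥ u) := smul_le_smul_of_nonneg_left h (pow_nonneg hs m)
      _ = M *ᵥ (s ^ m • u) := (mulVec_smul M (s ^ m) u).symm
      _ ≤ M *ᵥ (M ^ m *ᵥ u) := mulVec_mono_of_nonneg hM ih
      _ = M ^ (m + 1) *ᵥ u := by rw [mulVec_mulVec, pow_succ']

section LinftyOpNorm

open scoped Matrix.Norms.Operator

theorem pow_le_linfty_opNorm_pow (hM : ∀ v w, 0 ≤ M v w) (hu : 0 < u) (hs : 0 ≤ s)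
    (h : s • u ≤ M *ᵥ u) (m : ℕ) : s ^ m ≤ ‖M ^ m‖ := by
  refine le_of_mul_le_mul_right ?_ (norm_pos_iff.2 hu.ne')
  calc s ^ m * ‖u‖ = ‖s ^ m • u‖ := by rw [norm_smul, Real.norm_of_nonneg (pow_nonneg hs m)]
    _ ≤ ‖M ^ m *ᵥ u‖ := by
      refine (pi_norm_le_iff_of_nonneg (norm_nonneg _)).2 fun v => ?_
      have hv : 0 ≤ (s ^ m • u) v := mul_nonneg (pow_nonneg hs m) (hu.le v)
      calc ‖(s ^ m • u) v‖ = (s ^ m • u) v := Real.norm_of_nonneg hv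
        _ ≤ (M ^ m *ᵥ u) v := pow_smul_le_pow_mulVec hM hs h m v
        _ ≤ ‖(M ^ m *ᵥ u) v‖ := Real.le_norm_self _
        _ ≤ ‖M ^ m *ᵥ u‖ := norm_le_pi_norm _ v
    _ ≤ ‖M ^ m‖ * ‖u‖ := Matrix.linfty_opNorm_mulVec _ _

theorem linfty_opNorm_map_ofReal (M : Matrix n n ℝ) : ‖M.map ((↑) : ℝ → ℂ)‖ = ‖M‖ := by
  simp [Matrix.linfty_opNorm_def]

theorem spectralRadius_ne_top (B : Matrix n n ℂ) : spectralRadius ℂ B ≠ ⊤ := by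
  have : CompleteSpace (Matrix n n ℂ) := FiniteDimensional.complete ℂ _
  rcases isEmpty_or_nonempty n with _ | _
  · simp
  · exact ((spectrum.spectralRadius_le_nnnorm (𝕜 := ℂ) B).trans_lt ENNReal.coe_lt_top).ne

theorem le_specRad_of_smul_le_mulVec (hM : ∀ v w, 0 ≤ M v w) (hu : 0 < u)
    (h : s • u ≤ M *ᵥ u) : s ≤ specRad M := by
  rcases lt_or_ge s 0 with hs | hs
  · exact hs.le.trans ENNReal.toReal_nonneg
  have : CompleteSpace (Matrix n n ℂ) := FiniteDimensional.complete ℂ _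
  refine (ENNReal.ofReal_le_iff_le_toReal (spectralRadius_ne_top _)).1
    (ofReal_le_spectralRadius_of_pow_le_norm_pow hs fun m => ?_)
  have hpow : M.map ((↑) : ℝ → ℂ) ^ m = (M ^ m).map (↑) :=
    (Matrix.map_pow M Complex.ofRealHom m).symm
  rw [hpow, linfty_opNorm_map_ofReal]
  exact pow_le_linfty_opNorm_pow hM hu hs h m

theorem exists_mulVec_eq_smul_norm_eq_spectralRadius [Nonempty n] (B : Matrix n n ℂ) :
    ∃ (z : ℂ) (x : n → ℂ), x ≠ 0 ∧ B *ᵥ x = z • x ∧ ‖z‖ = (spectralRadius ℂ B).toReal := by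
  have : CompleteSpace (Matrix n n ℂ) := FiniteDimensional.complete ℂ _
  obtain ⟨z, hz, hzr⟩ := spectrum.exists_nnnorm_eq_spectralRadius B
  rw [← Matrix.spectrum_toLin', ← Module.End.hasEigenvalue_iff_mem_spectrum] at hz
  obtain ⟨x, hx⟩ := hz.exists_hasEigenvector
  exact ⟨z, x, hx.2, by simpa using hx.apply_eq_smul, by simp [← hzr]⟩

end LinftyOpNorm

-- The moduli of the entries of a complex eigenvector for an eigenvalue of maximal modulus.
theorem exists_specRad_smul_le_mulVec [Nonempty n] (hM : ∀ v w, 0 ≤ M v w) :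
    ∃ u : n → ℝ, 0 < u ∧ specRad M • u ≤ M *ᵥ u := by
  obtain ⟨z, x, hx, hzx, hz⟩ :=
    exists_mulVec_eq_smul_norm_eq_spectralRadius (M.map ((↑) : ℝ → ℂ))
  obtain ⟨a, ha⟩ := Function.ne_iff.1 hx
  refine ⟨fun v => ‖x v‖,
    Pi.lt_def.2 ⟨fun v => norm_nonneg (x v), a, norm_pos_iff.2 ha⟩, fun v => ?_⟩
  calc specRad M * ‖x v‖ = ‖(z • x) v‖ := by rw [Pi.smul_apply, norm_smul, hz, specRad]
    _ = ‖∑ w, (M v w : ℂ) * x w‖ := by rw [← hzx]; rfl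
    _ ≤ ∑ w, ‖(M v w : ℂ) * x w‖ := norm_sum_le _ _
    _ = ∑ w, M v w * ‖x w‖ := by simp [abs_of_nonneg (hM v _)]

theorem exists_specRad_mul_le_mulVec [Nonempty n] (hM : ∀ v w, 0 ≤ M v w) (hx : ∀ v, 0 < x v) :
    ∃ b, specRad M * x b ≤ (M *ᵥ x) b := by
  obtain ⟨u, hu, hMu⟩ := exists_specRad_smul_le_mulVec hM
  obtain ⟨b, hb⟩ := Finite.exists_max fun v => u v / x v
  set t := u b / x b
  have hut : u ≤ t • x := fun v => (div_le_iff₀ (hx v)).1 (hb v)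
  have hub : u b = t * x b := (div_mul_cancel₀ (u b) (hx b).ne').symm
  have ht0 : 0 < t := by
    obtain ⟨-, a, ha⟩ := Pi.lt_def.1 hu
    exact (div_pos ha (hx a)).trans_le (hb a)
  refine ⟨b, le_of_mul_le_mul_left ?_ ht0⟩
  calc t * (specRad M * x b) = specRad M * u b := by rw [hub]; ring
    _ ≤ (M *ᵥ u) b := hMu b
    _ ≤ (M *ᵥ (t • x)) b := mulVec_mono_of_nonneg hM hut b
    _ = t * (M *ᵥ x) b := by rw [mulVec_smul, Pi.smul_apply, smul_eq_mul]

theorem exists_mulVec_le_specRad_mul [Nonempty n] (hM : ∀ v w, 0 ≤ M v w) (hx : ∀ v, 0 < x v) :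
    ∃ b, (M *ᵥ x) b ≤ specRad M * x b := by
  obtain ⟨b, hb⟩ := Finite.exists_min fun v => (M *ᵥ x) v / x v
  have hx0 : 0 < x := Pi.lt_def.2 ⟨fun v => (hx v).le, b, hx b⟩
  exact ⟨b, (div_le_iff₀ (hx b)).1 <| le_specRad_of_smul_le_mulVec hM hx0 fun v =>
    (le_div_iff₀ (hx v)).1 (hb v)⟩

theorem specRad_eq_of_mulVec_eq_smul [Nonempty n] (hM : ∀ v w, 0 ≤ M v w)
    (hx : ∀ v, 0 < x v) (h : M *ᵥ x = r • x) : specRad M = r := by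
  obtain ⟨a, ha⟩ := exists_specRad_mul_le_mulVec hM hx
  obtain ⟨b, hb⟩ := exists_mulVec_le_specRad_mul hM hx
  rw [h] at ha hb
  exact le_antisymm (le_of_mul_le_mul_right ha (hx a)) (le_of_mul_le_mul_right hb (hx b))

theorem lt_specRad_of_smul_lt_mulVec (hM : ∀ v w, 0 ≤ M v w) (hS : ∀ v w, 0 < S v w)
    (hMS : Commute M S) (hu : 0 ≤ u) (h : s • u < M *ᵥ u) : s < specRad M := by
  have hu0 : 0 < u := hu.lt_of_ne fun h0 => by simp [← h0] at h
  have hSu := mulVec_pos_of_pos hS hu0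
  have : Nonempty n := ⟨(Pi.lt_def.1 h).2.choose⟩
  obtain ⟨b, hb⟩ := exists_mulVec_le_specRad_mul hM hSu
  refine lt_of_mul_lt_mul_right ?_ (hSu b).le
  calc s * (S *ᵥ u) b = (S *ᵥ (s • u)) b := by rw [mulVec_smul, Pi.smul_apply, smul_eq_mul]
    _ < (S *ᵥ (M *ᵥ u)) b := mulVec_lt_mulVec_of_pos hS h b
    _ = (M *ᵥ (S *ᵥ u)) b := by rw [mulVec_mulVec_comm hMS]
    _ ≤ specRad M * (S *ᵥ u) b := hb

theorem specRad_lt_of_mulVec_lt_smul (hM : ∀ v w, 0 ≤ M v w) (hS : ∀ v w, 0 < S v w)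
    (hMS : Commute M S) (hu : 0 < u) (h : M *ᵥ u < s • u) : specRad M < s := by
  have hSu := mulVec_pos_of_pos hS hu
  have : Nonempty n := ⟨(Pi.lt_def.1 h).2.choose⟩
  obtain ⟨b, hb⟩ := exists_specRad_mul_le_mulVec hM hSu
  refine lt_of_mul_lt_mul_right ?_ (hSu b).le
  calc specRad M * (S *ᵥ u) b ≤ (M *ᵥ (S *ᵥ u)) b := hb
    _ = (S *ᵥ (M *ᵥ u)) b := by rw [mulVec_mulVec_comm hMS]
    _ < (S *ᵥ (s • u)) b := mulVec_lt_mulVec_of_pos hS h b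
    _ = s * (S *ᵥ u) b := by rw [mulVec_smul, Pi.smul_apply, smul_eq_mul]

theorem exists_pos_mulVec_eq_specRad_smul [Nonempty n] (hS : ∀ v w, 0 < S v w) :
    ∃ x : n → ℝ, (∀ v, 0 < x v) ∧ S *ᵥ x = specRad S • x := by
  have hS0 : ∀ v w, 0 ≤ S v w := fun v w => (hS v w).le
  obtain ⟨x, hx, hle⟩ := exists_specRad_smul_le_mulVec hS0
  have heq : S *ᵥ x = specRad S • x := by
    refine (hle.eq_of_not_lt fun hlt => ?_).symm
    exact (lt_specRad_of_smul_lt_mulVec hS0 hS (Commute.refl S) hx.le hlt).false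
  refine ⟨x, fun v => (hx.le v).lt_of_ne fun hv => ?_, heq⟩
  have hpos := mulVec_pos_of_pos hS hx v
  rw [heq, Pi.smul_apply, ← hv] at hpos
  simp at hpos

theorem mulVec_eq_specRad_smul_of_commute [Nonempty n] (hS : ∀ v w, 0 < S v w)
    (hx : ∀ v, 0 < x v) (hSx : S *ᵥ x = r • x) (hM : ∀ v w, 0 ≤ M v w) (hMS : Commute M S) :
    M *ᵥ x = specRad M • x := by
  obtain ⟨d, hd⟩ := Finite.exists_min fun v => (M *ᵥ x) v / x v
  set c := (M *ᵥ x) d / x d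
  have hcx : c • x ≤ M *ᵥ x := fun v => (le_div_iff₀ (hx v)).1 (hd v)
  have hcd : c * x d = (M *ᵥ x) d := div_mul_cancel₀ _ (hx d).ne'
  suffices heq : M *ᵥ x = c • x by rw [specRad_eq_of_mulVec_eq_smul hM hx heq, heq]
  refine (hcx.eq_of_not_lt fun hlt => ?_).symm
  have hlt' := mulVec_lt_mulVec_of_pos hS hlt d
  rw [← mulVec_mulVec_comm hMS, mulVec_smul, hSx, mulVec_smul] at hlt'
  simp only [Pi.smul_apply, smul_eq_mul, ← hcd] at hlt'
  exact (hlt'.trans_eq (mul_left_comm r c (x d))).false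

end NonnegativeMatrix

section MaximumPrinciple

variable {n : Type*} [Fintype n]

/-- The maximum principle for `M - l` on the complement of `D`: a nonnegative vector that vanishes
on `D` and satisfies `l u ≤ M u` off `D` is zero. -/
def MaximumPrinciple (M : Matrix n n ℝ) (D : Finset n) (l : ℝ) : Prop :=
  ∀ u : n → ℝ, 0 ≤ u → (∀ v ∈ D, u v = 0) → (∀ v ∉ D, l * u v ≤ (M *ᵥ u) v) → u = 0

namespace MaximumPrinciple

variable {M : Matrix n n ℝ} {D : Finset n} {l : ℝ} {z : n → ℝ}

theorem eq_zero (h : MaximumPrinciple M D l) (hM : ∀ v w, 0 ≤ M v w) (hzD : ∀ v ∈ D, z v = 0)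
    (hz : ∀ v ∉ D, (M *ᵥ z) v = l * z v) : z = 0 := by
  have habs : |z| = 0 := by
    refine h |z| (abs_nonneg z) (fun v hv => by simp [hzD v hv]) fun v hv => ?_
    calc l * |z v| ≤ |l| * |z v| := mul_le_mul_of_nonneg_right (le_abs_self l) (abs_nonneg _)
      _ = |∑ w, M v w * z w| := by rw [← abs_mul, ← hz v hv]; rfl
      _ ≤ ∑ w, |M v w * z w| := Finset.abs_sum_le_sum_abs _ _
      _ = (M *ᵥ |z|) v := by
        simp [Matrix.mulVec, dotProduct, abs_mul, abs_of_nonneg (hM v _)]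
  exact funext fun v => abs_eq_zero.1 (congrFun habs v)

theorem nonneg (h : MaximumPrinciple M D l) (hM : ∀ v w, 0 ≤ M v w) (hzD : ∀ v ∈ D, 0 ≤ z v)
    (hz : ∀ v ∉ D, (M *ᵥ z) v = l * z v) : 0 ≤ z := by
  suffices hneg : z⁻ = 0 from negPart_eq_zero.1 hneg
  refine h z⁻ (negPart_nonneg z) (fun v hv => ?_) fun v hv => ?_
  · rw [Pi.negPart_apply, negPart_eq_zero.2 (hzD v hv)]
  rw [Pi.negPart_apply]
  rcases le_total 0 (z v) with hv0 | hv0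
  · rw [negPart_eq_zero.2 hv0, mul_zero]
    exact mulVec_nonneg_of_nonneg hM (negPart_nonneg z) v
  · calc l * (z v)⁻ = (M *ᵥ (-z)) v := by
          rw [negPart_eq_neg.2 hv0, mulVec_neg, Pi.neg_apply, hz v hv, mul_neg]
      _ ≤ (M *ᵥ z⁻) v := mulVec_mono_of_nonneg hM (neg_le_negPart z) v

-- By `eq_zero` the linear map `z ↦ z` on `D`, `z ↦ M z - l z` off `D` is injective.
theorem exists_extension (h : MaximumPrinciple M D l) (hM : ∀ v w, 0 ≤ M v w)
    (x : {v // v ∈ D} → ℝ) :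
    ∃ y : n → ℝ, (∀ v : {v // v ∈ D}, y v = x v) ∧ ∀ v ∉ D, (M *ᵥ y) v = l * y v := by
  classical
  let T : (n → ℝ) →ₗ[ℝ] (n → ℝ) := LinearMap.pi fun v =>
    if v ∈ D then LinearMap.proj v else LinearMap.proj v ∘ₗ (M.mulVecLin - l • LinearMap.id)
  have hTD : ∀ z, ∀ v ∈ D, T z v = z v := fun z v hv => by simp [T, hv]
  have hT : ∀ z, ∀ v ∉ D, T z v = (M *ᵥ z) v - l * z v := fun z v hv => by simp [T, hv]
  have hinj : Function.Injective T := by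
    refine (injective_iff_map_eq_zero T).2 fun z hz => h.eq_zero hM (fun v hv => ?_) fun v hv => ?_
    · rw [← hTD z v hv, hz, Pi.zero_apply]
    · rw [← sub_eq_zero, ← hT z v hv, hz, Pi.zero_apply]
  obtain ⟨y, hy⟩ := LinearMap.injective_iff_surjective.1 hinj
    fun v => if hv : v ∈ D then x ⟨v, hv⟩ else 0
  refine ⟨y, fun v => ?_, fun v hv => ?_⟩
  · rw [← hTD y v v.2, hy]
    exact dif_pos v.2
  · rw [← sub_eq_zero, ← hT y v hv, hy]
    exact dif_neg hv

end MaximumPrinciple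

end MaximumPrinciple

section Block

variable {n R : Type*} [Fintype n] [NonUnitalNonAssocSemiring R]

theorem mulVec_eq_toSquareBlockProp_mulVec {M : Matrix n n R} {C : Finset n} {u : n → R}
    {v : {v // v ∈ C}} (h : ∀ w ∉ C, M v w * u w = 0) :
    (M *ᵥ u) v = (M.toSquareBlockProp (· ∈ C) *ᵥ fun w => u w) v :=
  calc (M *ᵥ u) v = ∑ w ∈ C, M v w * u w :=
        (Finset.sum_subset C.subset_univ fun w _ hw => h w hw).symm
    _ = (M.toSquareBlockProp (· ∈ C) *ᵥ fun w => u w) v :=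
        (Finset.sum_coe_sort C fun w => M v w * u w).symm

theorem toSquareBlockProp_mul {M N : Matrix n n R} {C : Finset n}
    (h : ∀ a ∈ C, ∀ b ∉ C, ∀ c ∈ C, M a b * N b c = 0) :
    (M * N).toSquareBlockProp (· ∈ C) =
      M.toSquareBlockProp (· ∈ C) * N.toSquareBlockProp (· ∈ C) := by
  ext a c
  exact mulVec_eq_toSquareBlockProp_mulVec (u := N.col c) fun b hb => h a a.2 b hb c c.2

variable [DecidableEq n]

theorem mulVec_eq_toSquareBlockProp_mulVec_add (M : Matrix n n R) (C : Finset n) (u : n → R)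
    (v : {v // v ∈ C}) :
    (M *ᵥ u) v =
      (M.toSquareBlockProp (· ∈ C) *ᵥ fun w => u w) v + ∑ w ∈ Cᶜ, M v w * u w :=
  calc (M *ᵥ u) v = ∑ w ∈ C, M v w * u w + ∑ w ∈ Cᶜ, M v w * u w :=
        (Finset.sum_add_sum_compl C fun w => M v w * u w).symm
    _ = _ := by rw [← Finset.sum_coe_sort C fun w => M v w * u w]; rfl

theorem exists_pos_of_pow_pos {N : Matrix n n ℕ} {C : Set n} {m : ℕ} {v w : n}
    (hv : v ∈ C) (hw : w ∉ C) (h : 0 < (N ^ m) v w) : ∃ a ∈ C, ∃ b ∉ C, 0 < N a b := by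
  induction m generalizing v with
  | zero =>
    rw [pow_zero, Matrix.one_apply_ne (ne_of_mem_of_not_mem hv hw)] at h
    exact absurd h (lt_irrefl 0)
  | succ m ih =>
    rw [pow_succ', Matrix.mul_apply] at h
    obtain ⟨b, -, hb⟩ := Finset.exists_ne_zero_of_sum_ne_zero h.ne'
    by_cases hbC : b ∈ C
    · exact ih hbC (Nat.pos_of_ne_zero (right_ne_zero_of_mul hb))
    · exact ⟨v, hv, b, hbC, Nat.pos_of_ne_zero (left_ne_zero_of_mul hb)⟩

/-- The entrywise cast of a matrix of natural numbers to the reals. -/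
def realMatrix : Matrix n n ℕ →+* Matrix n n ℝ :=
  (Nat.castRingHom ℝ).mapMatrix

@[simp]
theorem realMatrix_apply (N : Matrix n n ℕ) (v w : n) : realMatrix N v w = (N v w : ℝ) :=
  rfl

theorem realMatrix_nonneg (N : Matrix n n ℕ) (v w : n) : 0 ≤ realMatrix N v w :=
  Nat.cast_nonneg _

end Block

section Components

variable {k : ℕ} {A : Fin k → Matrix V V ℕ}

theorem Apow_single (A : Fin k → Matrix V V ℕ) (i : Fin k) (m : ℕ) :
    Apow A (Pi.single i m) = A i ^ m := by
  rw [Apow, List.prod_map_eq_pow_single i _ fun a ha _ => by simp [ha],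
    List.count_eq_one_of_mem (List.nodup_finRange k) (List.mem_finRange i)]
  simp

theorem commute_Apow (hcomm : ∀ i j, A i * A j = A j * A i) (i : Fin k) (n : Fin k → ℕ) :
    Commute (A i) (Apow A n) :=
  Commute.list_prod_right _ _ fun N hN => by
    obtain ⟨j, -, rfl⟩ := List.mem_map.1 hN
    exact Commute.pow_right (hcomm i j) (n j)

theorem Apow_add (hcomm : ∀ i j, A i * A j = A j * A i) (n m : Fin k → ℕ) :
    Apow A (n + m) = Apow A n * Apow A m := by
  unfold Apow
  induction List.finRange k with
  | nil => simp
  | cons a l ih =>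
    have hc : Commute (A a ^ m a) (l.map fun i => A i ^ n i).prod :=
      Commute.list_prod_right _ _ fun N hN => by
        obtain ⟨i, -, rfl⟩ := List.mem_map.1 hN
        exact Commute.pow_pow (hcomm a i) _ _
    rw [List.map_cons, List.map_cons, List.map_cons, List.prod_cons, List.prod_cons,
      List.prod_cons, ih, Pi.add_apply, pow_add]
    exact hc.mul_mul_mul_comm _ _

theorem Reaches.of_pow_pos {i : Fin k} {m : ℕ} {v w : V} (h : 0 < (A i ^ m) v w) :
    Reaches A v w :=
  ⟨Pi.single i m, by rwa [Apow_single]⟩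

theorem Reaches.of_pos {i : Fin k} {v w : V} (h : 0 < A i v w) : Reaches A v w :=
  Reaches.of_pow_pos (m := 1) (by rwa [pow_one])

theorem Reaches.refl (A : Fin k → Matrix V V ℕ) (v : V) : Reaches A v v :=
  ⟨0, by simp [Apow]⟩

theorem Reaches.trans (hcomm : ∀ i j, A i * A j = A j * A i) {u v w : V}
    (huv : Reaches A u v) (hvw : Reaches A v w) : Reaches A u w := by
  obtain ⟨n, hn⟩ := huv
  obtain ⟨m, hm⟩ := hvw
  refine ⟨n + m, ?_⟩
  rw [Apow_add hcomm, Matrix.mul_apply]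
  exact Finset.sum_pos' (fun _ _ => Nat.zero_le _) ⟨v, Finset.mem_univ v, Nat.mul_pos hn hm⟩

theorem exists_isSCC_mem (A : Fin k → Matrix V V ℕ) (v : V) : ∃ C, IsSCC A C ∧ v ∈ C := by
  classical
  exact ⟨Finset.univ.filter fun w => Reaches A v w ∧ Reaches A w v, ⟨v, by simp⟩,
    by simp [Reaches.refl]⟩

namespace IsSCC

variable {C D : Finset V} {v w : V}

theorem nonempty (hC : IsSCC A C) : C.Nonempty :=
  let ⟨v, hv⟩ := hC
  ⟨v, (hv v).2 ⟨Reaches.refl A v, Reaches.refl A v⟩⟩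

theorem mem_iff (hcomm : ∀ i j, A i * A j = A j * A i) (hC : IsSCC A C) (hv : v ∈ C) :
    w ∈ C ↔ Reaches A v w ∧ Reaches A w v := by
  obtain ⟨c, hc⟩ := hC
  obtain ⟨hcv, hvc⟩ := (hc v).1 hv
  rw [hc]
  exact ⟨fun ⟨h₁, h₂⟩ => ⟨hvc.trans hcomm h₁, h₂.trans hcomm hcv⟩,
    fun ⟨h₁, h₂⟩ => ⟨hcv.trans hcomm h₁, h₂.trans hcomm hvc⟩⟩

theorem eq_of_mem_of_mem (hcomm : ∀ i j, A i * A j = A j * A i) (hC : IsSCC A C)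
    (hD : IsSCC A D) (hvC : v ∈ C) (hvD : v ∈ D) : C = D := by
  ext w
  rw [hC.mem_iff hcomm hvC, hD.mem_iff hcomm hvD]

theorem mem_of_reaches_of_reaches (hcomm : ∀ i j, A i * A j = A j * A i) (hC : IsSCC A C)
    {u : V} (hu : u ∈ C) (hw : w ∈ C) (huv : Reaches A u v) (hvw : Reaches A v w) : v ∈ C :=
  (hC.mem_iff hcomm hu).2 ⟨huv, hvw.trans hcomm ((hC.mem_iff hcomm hw).1 hu).1⟩

theorem commute_toSquareBlockProp_Apow (hcomm : ∀ i j, A i * A j = A j * A i)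
    (hC : IsSCC A C) (i : Fin k) (n : Fin k → ℕ) :
    Commute ((realMatrix (A i)).toSquareBlockProp (· ∈ C))
      ((realMatrix (Apow A n)).toSquareBlockProp (· ∈ C)) := by
  have hmul {M N : Matrix V V ℕ} (hM : ∀ a b, 0 < M a b → Reaches A a b)
      (hN : ∀ a b, 0 < N a b → Reaches A a b) :
      (realMatrix (M * N)).toSquareBlockProp (· ∈ C) =
        (realMatrix M).toSquareBlockProp (· ∈ C) * (realMatrix N).toSquareBlockProp (· ∈ C) := by
    rw [map_mul]
    refine toSquareBlockProp_mul fun a ha b hb c hc => ?_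
    by_contra hne
    simp only [realMatrix_apply, mul_eq_zero, Nat.cast_eq_zero, not_or, ← Nat.pos_iff_ne_zero]
      at hne
    exact hb (hC.mem_of_reaches_of_reaches hcomm ha hc (hM a b hne.1) (hN b c hne.2))
  have hA (a b : V) (h : 0 < A i a b) : Reaches A a b := .of_pos h
  have hn (a b : V) (h : 0 < Apow A n a b) : Reaches A a b := ⟨n, h⟩
  rw [commute_iff_eq, ← hmul hA hn, ← hmul hn hA, (commute_Apow hcomm i n).eq]

theorem exists_pos_commute (hcomm : ∀ i j, A i * A j = A j * A i) (hC : IsSCC A C) :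
    ∃ S : Matrix {v // v ∈ C} {v // v ∈ C} ℝ, (∀ v w, 0 < S v w) ∧
      ∀ i, Commute ((realMatrix (A i)).toSquareBlockProp (· ∈ C)) S := by
  have hreach (v w : {v // v ∈ C}) : Reaches A v w := ((hC.mem_iff hcomm v.2).1 w.2).1
  choose n hn using hreach
  refine ⟨∑ a, ∑ b, (realMatrix (Apow A (n a b))).toSquareBlockProp (· ∈ C), fun v w => ?_,
    fun i => Commute.sum_right _ _ _ fun a _ => Commute.sum_right _ _ _ fun b _ =>
      hC.commute_toSquareBlockProp_Apow hcomm i (n a b)⟩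
  have hnonneg (a b : {v // v ∈ C}) : 0 ≤ realMatrix (Apow A (n a b)) v w :=
    realMatrix_nonneg _ _ _
  simp only [Matrix.sum_apply]
  exact Finset.sum_pos' (fun a _ => Finset.sum_nonneg fun b _ => hnonneg a b)
    ⟨v, Finset.mem_univ v, Finset.sum_pos' (fun b _ => hnonneg v b)
      ⟨w, Finset.mem_univ w, Nat.cast_pos.2 (hn v w)⟩⟩

end IsSCC

theorem compRad_eq_specRad (A : Fin k → Matrix V V ℕ) (C : Finset V) (i : Fin k) :
    compRad A C i = specRad ((realMatrix (A i)).toSquareBlockProp (· ∈ C)) := by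
  rw [compRad, specRadN, specRad]
  congr 2

end Components

section Dominance

variable {k : ℕ} {A : Fin k → Matrix V V ℕ} {C D : Finset V}

theorem hereditary_of_forall_isSCC_reaches (hcomm : ∀ i j, A i * A j = A j * A i)
    (hD : IsSCC A D) (h : ∀ C, IsSCC A C → ∃ v ∈ C, ∃ w ∈ D, Reaches A v w) :
    Hereditary A D := by
  intro v hv w hvw
  obtain ⟨C, hC, hwC⟩ := exists_isSCC_mem A w
  obtain ⟨a, ha, b, hb, hab⟩ := h C hC
  exact hD.mem_of_reaches_of_reaches hcomm hv hb hvw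
    (((hC.mem_iff hcomm hwC).1 ha).1.trans hcomm hab)

-- A nonzero `u` violating the principle is supported, downstream of one of the components meeting
-- its support, on that component alone.
theorem maximumPrinciple_of_compRad_lt (hcomm : ∀ i j, A i * A j = A j * A i) {j : Fin k} {l : ℝ}
    (hlt : ∀ C, IsSCC A C → C ≠ D → compRad A C j < l) :
    MaximumPrinciple (realMatrix (A j)) D l := by
  intro u hu huD hle
  by_contra hne
  let _ : Preorder V :=
    { le := Reaches A, le_refl := Reaches.refl A, le_trans := fun _ _ _ => Reaches.trans hcomm }
  obtain ⟨v, hv, hmax⟩ :=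
    (Set.toFinite {v | u v ≠ 0}).exists_maximal (Function.ne_iff.1 hne)
  obtain ⟨C, hC, hvC⟩ := exists_isSCC_mem A v
  have hCD : C ≠ D := by
    rintro rfl
    exact hv (huD v hvC)
  have hout : ∀ a : {a // a ∈ C}, ∀ w ∉ C, realMatrix (A j) a w * u w = 0 := by
    intro a w hwC
    by_contra hne0
    obtain ⟨haw, hw⟩ := mul_ne_zero_iff.1 hne0
    have hvw : Reaches A v w := ((hC.mem_iff hcomm hvC).1 a.2).1.trans hcomm
      (Reaches.of_pos (Nat.pos_of_ne_zero (Nat.cast_ne_zero.1 haw)))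
    exact hwC ((hC.mem_iff hcomm hvC).2 ⟨hvw, hmax hw hvw⟩)
  refine (hlt C hC hCD).not_ge ?_
  rw [compRad_eq_specRad]
  have hu0 : 0 < fun w : {w // w ∈ C} => u w :=
    Pi.lt_def.2 ⟨fun w => hu w, ⟨v, hvC⟩, (hu v).lt_of_ne' hv⟩
  have hA (a b : {a // a ∈ C}) : 0 ≤ (realMatrix (A j)).toSquareBlockProp (· ∈ C) a b :=
    realMatrix_nonneg (A j) a b
  refine le_specRad_of_smul_le_mulVec hA hu0 fun a => ?_
  by_cases haD : (a : V) ∈ D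
  · simp only [Pi.smul_apply, huD a haD, smul_zero]
    exact mulVec_nonneg_of_nonneg hA hu0.le a
  · exact (hle a haD).trans_eq (mulVec_eq_toSquareBlockProp_mulVec (hout a))

theorem exists_pos_block_eigenvector (hcomm : ∀ i j, A i * A j = A j * A i) (hD : IsSCC A D) :
    ∃ x : {v // v ∈ D} → ℝ, (∀ v, 0 < x v) ∧
      ∀ i, (realMatrix (A i)).toSquareBlockProp (· ∈ D) *ᵥ x = compRad A D i • x := by
  obtain ⟨S, hS, hAS⟩ := hD.exists_pos_commute hcomm
  have : Nonempty {v // v ∈ D} := hD.nonempty.to_subtype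
  obtain ⟨x, hx, hSx⟩ := exists_pos_mulVec_eq_specRad_smul hS
  refine ⟨x, hx, fun i => ?_⟩
  rw [compRad_eq_specRad]
  exact mulVec_eq_specRad_smul_of_commute hS hx hSx (fun _ _ => realMatrix_nonneg _ _ _) (hAS i)

theorem mulVec_eq_block_mulVec_of_hereditary (hDher : Hereditary A D) (i : Fin k) (u : V → ℝ)
    (v : {v // v ∈ D}) : (realMatrix (A i) *ᵥ u) v =
      ((realMatrix (A i)).toSquareBlockProp (· ∈ D) *ᵥ fun w => u w) v := by
  refine mulVec_eq_toSquareBlockProp_mulVec fun w hw => ?_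
  have hvw : A i v w = 0 := Nat.eq_zero_of_not_pos fun h => hw (hDher v v.2 w (Reaches.of_pos h))
  simp [hvw]

theorem exists_nonneg_joint_eigenvector (hcomm : ∀ i j, A i * A j = A j * A i) (hD : IsSCC A D)
    (hDher : Hereditary A D) {j : Fin k}
    (hj : ∀ C, IsSCC A C → C ≠ D → compRad A C j < compRad A D j) :
    ∃ y : V → ℝ, 0 ≤ y ∧ (∀ v ∈ D, 0 < y v) ∧
      ∀ i, realMatrix (A i) *ᵥ y = compRad A D i • y := by
  obtain ⟨x, hx, hAx⟩ := exists_pos_block_eigenvector hcomm hD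
  have hmax := maximumPrinciple_of_compRad_lt hcomm hj
  have hA : ∀ v w, 0 ≤ realMatrix (A j) v w := realMatrix_nonneg (A j)
  obtain ⟨y, hyx, hyj⟩ := hmax.exists_extension hA x
  have hyD : ∀ v ∈ D, 0 < y v := fun v hv => (hx ⟨v, hv⟩).trans_eq (hyx ⟨v, hv⟩).symm
  have hAyD : ∀ i, ∀ v ∈ D, (realMatrix (A i) *ᵥ y) v = compRad A D i * y v := by
    intro i v hv
    rw [mulVec_eq_block_mulVec_of_hereditary hDher i y ⟨v, hv⟩, funext hyx, hAx i,
      hyx ⟨v, hv⟩, Pi.smul_apply, smul_eq_mul]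
  have hAy : realMatrix (A j) *ᵥ y = compRad A D j • y := by
    ext v
    exact if hv : v ∈ D then hAyD j v hv else hyj v hv
  refine ⟨y, hmax.nonneg hA (fun v hv => (hyD v hv).le) hyj, hyD, fun i => sub_eq_zero.1 ?_⟩
  refine hmax.eq_zero hA (fun v hv => sub_eq_zero.2 (hAyD i v hv)) fun v _ => ?_
  have hij : Commute (realMatrix (A j)) (realMatrix (A i)) := Commute.map (hcomm j i) realMatrix
  rw [mulVec_sub, mulVec_smul, mulVec_mulVec_comm hij, hAy, mulVec_smul, smul_comm, ← smul_sub]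
  rfl

theorem exists_Apow_mulVec_eq_smul {y : V → ℝ} {c : Fin k → ℝ}
    (hAy : ∀ i, realMatrix (A i) *ᵥ y = c i • y) (n : Fin k → ℕ) :
    ∃ μ : ℝ, realMatrix (Apow A n) *ᵥ y = μ • y := by
  have hmul : ∀ M N : Matrix V V ℕ, (∃ μ : ℝ, realMatrix M *ᵥ y = μ • y) →
      (∃ μ : ℝ, realMatrix N *ᵥ y = μ • y) → ∃ μ : ℝ, realMatrix (M * N) *ᵥ y = μ • y := by
    rintro M N ⟨μ, hμ⟩ ⟨ν, hν⟩
    exact ⟨ν * μ, by rw [map_mul, ← mulVec_mulVec, hν, mulVec_smul, hμ, mul_smul]⟩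
  have hone : ∃ μ : ℝ, realMatrix (1 : Matrix V V ℕ) *ᵥ y = μ • y := ⟨1, by simp⟩
  refine List.prod_induction _ hmul hone fun N hN => ?_
  obtain ⟨i, -, rfl⟩ := List.mem_map.1 hN
  induction n i with
  | zero => rwa [pow_zero]
  | succ m ih => exact pow_succ (A i) m ▸ hmul _ _ ih ⟨c i, hAy i⟩

theorem pos_of_reaches {y : V → ℝ} {c : Fin k → ℝ} (hy : 0 ≤ y)
    (hAy : ∀ i, realMatrix (A i) *ᵥ y = c i • y) {v w : V} (hvw : Reaches A v w)
    (hw : 0 < y w) : 0 < y v := by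
  obtain ⟨n, hn⟩ := hvw
  obtain ⟨μ, hμ⟩ := exists_Apow_mulVec_eq_smul hAy n
  refine (hy v).lt_of_ne fun hv => ?_
  have hpos : 0 < (realMatrix (Apow A n) *ᵥ y) v :=
    Finset.sum_pos' (fun a _ => mul_nonneg (realMatrix_nonneg _ _ _) (hy a))
      ⟨w, Finset.mem_univ w, mul_pos (Nat.cast_pos.2 hn) hw⟩
  rw [hμ, Pi.smul_apply, ← hv] at hpos
  simp at hpos

theorem compRad_lt_of_mulVec_eq_smul (hcomm : ∀ i j, A i * A j = A j * A i) (hC : IsSCC A C)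
    {i : Fin k} {c : ℝ} {y : V → ℝ} (hy : ∀ v, 0 < y v)
    (hAy : realMatrix (A i) *ᵥ y = c • y) (hout : ∃ a ∈ C, ∃ b ∉ C, 0 < A i a b) :
    compRad A C i < c := by
  obtain ⟨S, hS, hAS⟩ := hC.exists_pos_commute hcomm
  obtain ⟨a, ha, b, hb, hab⟩ := hout
  have hsplit (v : {v // v ∈ C}) : c * y v = _ :=
    (congrFun hAy v).symm.trans (mulVec_eq_toSquareBlockProp_mulVec_add _ C y v)
  have hterm (v w : V) : 0 ≤ realMatrix (A i) v w * y w :=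
    mul_nonneg (realMatrix_nonneg _ _ _) (hy w).le
  rw [compRad_eq_specRad]
  have hy0 : 0 < fun v : {v // v ∈ C} => y v :=
    Pi.lt_def.2 ⟨fun v => (hy v).le, ⟨a, ha⟩, hy a⟩
  refine specRad_lt_of_mulVec_lt_smul (fun _ _ => realMatrix_nonneg _ _ _) hS (hAS i) hy0
    (Pi.lt_def.2 ⟨fun v => ?_, ⟨a, ha⟩, ?_⟩)
  · exact (le_add_of_nonneg_right (Finset.sum_nonneg fun w _ => hterm v w)).trans_eq
      (hsplit v).symm
  · refine (lt_add_of_pos_right _ ?_).trans_eq (hsplit ⟨a, ha⟩).symm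
    exact Finset.sum_pos' (fun w _ => hterm a w)
      ⟨b, Finset.mem_compl.2 hb, mul_pos (Nat.cast_pos.2 hab) (hy b)⟩

end Dominance

theorem dominance_all_colours_powers_general {V : Type*} [Fintype V] [DecidableEq V] {k : ℕ}
    (A : Fin k → Matrix V V ℕ)
    (hcomm : ∀ i j, A i * A j = A j * A i)
    (D : Finset V) (hD : IsSCC A D)
    (hconn : ∀ C : Finset V, IsSCC A C → ∀ i : Fin k,
      ∃ m : ℕ, ∃ v ∈ C, ∃ w ∈ D, 0 < ((A i) ^ m) v w)
    (hj : ∃ j : Fin k, ∀ C : Finset V, IsSCC A C → C ≠ D →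
      compRad A C j < compRad A D j) :
    ∀ C : Finset V, IsSCC A C → C ≠ D → ∀ i : Fin k,
      compRad A C i < compRad A D i := by
  intro C hC hCD i
  obtain ⟨j, hj⟩ := hj
  have hreach : ∀ E, IsSCC A E → ∃ v ∈ E, ∃ w ∈ D, Reaches A v w := fun E hE =>
    let ⟨_, v, hv, w, hw, hvw⟩ := hconn E hE i
    ⟨v, hv, w, hw, .of_pow_pos hvw⟩
  have hDher := hereditary_of_forall_isSCC_reaches hcomm hD hreach
  obtain ⟨y, hy0, hyD, hAy⟩ := exists_nonneg_joint_eigenvector hcomm hD hDher hj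
  have hy : ∀ v, 0 < y v := by
    intro v
    obtain ⟨E, hE, hvE⟩ := exists_isSCC_mem A v
    obtain ⟨a, ha, w, hw, haw⟩ := hreach E hE
    exact pos_of_reaches hy0 hAy (((hE.mem_iff hcomm hvE).1 ha).1.trans hcomm haw) (hyD w hw)
  obtain ⟨m, v, hv, w, hw, hvw⟩ := hconn C hC i
  have hwC : w ∉ C := fun hwC => hCD (hC.eq_of_mem_of_mem hcomm hD hwC hw)
  exact compRad_lt_of_mulVec_eq_smul hcomm hC hy (hAy i) (exists_pos_of_pow_pos hv hwC hvw)

/-- Corollary 4.3 of the paper: as in Theorem 4.2, but allowing singly-coloured bridges of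
any length: every component is connected to the hereditary component `D` by a power of each
single vertex matrix. -/
theorem dominance_all_colours_powers {V : Type*} [Fintype V] [DecidableEq V] [Nonempty V]
    {k : ℕ} (hk : 1 ≤ k)
    (A : Fin k → Matrix V V ℕ)
    (hcomm : ∀ i j, A i * A j = A j * A i)
    (hrow : ∀ i v, ∃ w, A i v w ≠ 0)
    (hcol : ∀ i v, ∃ w, A i w v ≠ 0)
    (hcomp : ∀ C : Finset V, IsSCC A C → NontrivialComp A C ∧ CoordIrreducible A C)
    (D : Finset V) (hD : IsSCC A D) (hDher : Hereditary A D)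
    (hconn : ∀ C : Finset V, IsSCC A C → ∀ i : Fin k,
      ∃ m : ℕ, ∃ v ∈ C, ∃ w ∈ D, 0 < ((A i) ^ m) v w)
    (hj : ∃ j : Fin k, ∀ C : Finset V, IsSCC A C → C ≠ D →
      compRad A C j < compRad A D j) :
    ∀ C : Finset V, IsSCC A C → C ≠ D → ∀ i : Fin k,
      compRad A C i < compRad A D i :=
  dominance_all_colours_powers_general A hcomm D hD hconn hj
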